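/- Let s ∈ ℝ. There exist real numbers x, y with 2 − s < x + y, x + y < 3 − s, 3 − s < x + 2y, s − 1 < x, 1 − s < x, 0 < x < 2, and 0 < y < 2 if and only if −1 < s < 2. -/

import Mathlib

theorem stmt_10 (s : ℝ) :
    (∃ x y : ℝ, 2 - s < x + y ∧ x + y < 3 - s ∧ 3 - s < x + 2 * y ∧
      s - 1 < x ∧ 1 - s < x ∧ 0 < x ∧ x < 2 ∧ 0 < y ∧ y < 2) ↔
    (-1 < s ∧ s < 2) := by
  constructor
  · rintro ⟨x, y, h1, h2, h3, h4, h5, h6, h7, h8, h9⟩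
    constructor <;> linarith
  · rintro ⟨hl, hu⟩
    -- With `t = 3 - s - x`, the conditions on `y` are `max (t - 1) (t / 2) < y < min t 2`, and
    -- `0 < t < 2` makes `y = 3 t / 4` admissible; it remains to pick `|s - 1| < x < min 2 (3 - s)`.
    obtain ⟨x, h1, h2, h3, h4⟩ : ∃ x : ℝ, s - 1 < x ∧ 1 - s < x ∧ x < 2 ∧ x < 3 - s := by
      rcases le_total s 1 with h | h
      · exact ⟨(3 - s) / 2, by linarith, by linarith, by linarith, by linarith⟩
      · exact ⟨1, by linarith, by linarith, by linarith, by linarith⟩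
    refine ⟨x, 3 * (3 - s - x) / 4, ?_, ?_, ?_, ?_, ?_, ?_, ?_, ?_, ?_⟩ <;> linarith
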